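/- Let x ∈ ℝ, z₀ ∈ ℂ, 0 < R < R′, and let φ, g : ℂ → ℂ be complex-differentiable on the open ball B(z₀, R′). Let λ₁, …, λₙ be pairwise distinct points of B(z₀, R) and let ϑ(λ₁), …, ϑ(λₙ) be arbitrary complex numbers. Define the kernel V by V(λ, μ) = ϑ(λ) φ(λ) e^{−g(λ)} · [e^{ix(λ−μ)/2 + (g(λ)−g(μ))/2} − e^{−ix(λ−μ)/2 − (g(λ)−g(μ))/2}] / (2πi(λ − μ)) for λ ≠ μ, and V(λ, λ) = ϑ(λ) φ(λ) e^{−g(λ)} (ix + g′(λ)) / (2πi). Then (1/(2πi)^{2n}) ∮ … ∮ ∏_{j=1}^{n} [ϑ(λ_j) φ(λ_j) e^{ix(λ_j − z_j)} e^{−g(z_j)} / (λ_j − z_j)] · det[(z_k − λ_j)^{−1}]_{j,k=1}^{n} dz_n … dz_1 = det[V(λ_j, λ_k)]_{j,k=1}^{n}, where each variable z₁, …, zₙ is integrated once counterclockwise around the circle |z − z₀| = R. -/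

import Mathlib

open MeasureTheory

/-- Iterated counterclockwise contour integral over the circle `|z - c| = R`
in each of the `n` variables. -/
noncomputable def iterCircleIntegral : (n : ℕ) → ((Fin n → ℂ) → ℂ) → ℂ → ℝ → ℂ
  | 0, f, _, _ => f Fin.elim0
  | n + 1, f, c, R =>
      circleIntegral (fun z => iterCircleIntegral n (fun w => f (Fin.cons z w)) c R) c R

/-!
The integrand depends on each `z k` through one column only, so the iterated integral of the
determinant is the determinant of the one-variable integrals. Put `h z = I * x * z + g z`. The
`(j, k)` integral has poles at `lam k` and `lam j`, hence equals `2 * π * I` times a divided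
difference of `exp (-h)`, also when the two poles coincide. Symmetrizing the exponentials turns this
divided difference into the kernel at `(lam k, lam j)` times `exp ((h (lam k) - h (lam j)) / 2)`;
this factor is a conjugation by a diagonal matrix, and the transposition is harmless, so neither
affects the determinant.
-/

section IteratedIntegral

variable {n : ℕ} {c : ℂ} {R : ℝ}

theorem iterCircleIntegral_sum_mul_prod {ι : Type*} (s : Finset ι) (a : ι → ℂ)
    {f : ι → Fin n → ℂ → ℂ} (hf : ∀ i ∈ s, ∀ k, CircleIntegrable (f i k) c R) :
    iterCircleIntegral n (fun z => ∑ i ∈ s, a i * ∏ k, f i k (z k)) c R =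
      ∑ i ∈ s, a i * ∏ k, ∮ z in C(c, R), f i k z := by
  induction n generalizing a with
  | zero => simp [iterCircleIntegral]
  | succ n ih =>
    have inner (z : ℂ) :
        iterCircleIntegral n
            (fun w => ∑ i ∈ s, a i * ∏ k, f i k ((Fin.cons z w : Fin (n + 1) → ℂ) k)) c R =
          ∑ i ∈ s, (a i * ∏ k : Fin n, ∮ w in C(c, R), f i k.succ w) * f i 0 z := by
      simp only [Fin.prod_univ_succ, Fin.cons_zero, Fin.cons_succ, ← mul_assoc]
      rw [ih (fun i => a i * f i 0 z) fun i hi k => hf i hi k.succ]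
      exact Finset.sum_congr rfl fun i _ => mul_right_comm _ _ _
    simp only [iterCircleIntegral, inner]
    have integrable : ∀ i ∈ s, CircleIntegrable
        (fun z => (a i * ∏ k : Fin n, ∮ w in C(c, R), f i k.succ w) * f i 0 z) c R :=
      fun i hi => (hf i hi 0).const_smul
    rw [circleIntegral.integral_fun_sum integrable]
    refine Finset.sum_congr rfl fun i _ => ?_
    rw [circleIntegral.integral_const_mul, Fin.prod_univ_succ]
    ring

theorem iterCircleIntegral_det {f : Fin n → Fin n → ℂ → ℂ}
    (hf : ∀ j k, CircleIntegrable (f j k) c R) :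
    iterCircleIntegral n (fun z => Matrix.det (Matrix.of fun j k => f j k (z k))) c R =
      Matrix.det (Matrix.of fun j k => ∮ z in C(c, R), f j k z) := by
  simp only [Matrix.det_apply', Matrix.of_apply]
  exact iterCircleIntegral_sum_mul_prod _ _ fun σ _ k => hf (σ k) k

end IteratedIntegral

section TwoPoles

open Complex Metric
open scoped Real Topology

variable {E : Type*} [NormedAddCommGroup E] [NormedSpace ℂ E] {f : ℂ → E} {a b c : ℂ} {R : ℝ}

theorem sub_ne_zero_of_mem_sphere_of_mem_ball {F : Type*} [SeminormedAddCommGroup F] {z a c : F}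
    {R : ℝ} (hz : z ∈ sphere c R) (ha : a ∈ ball c R) : z - a ≠ 0 :=
  sub_ne_zero.2 (sphere_disjoint_ball.ne_of_mem hz ha)

theorem circleIntegrable_inv_sub_mul_sub_smul (hf : ContinuousOn f (sphere c R))
    (ha : a ∈ ball c R) (hb : b ∈ ball c R) :
    CircleIntegrable (fun z => ((z - a) * (z - b))⁻¹ • f z) c R := by
  refine ContinuousOn.circleIntegrable (pos_of_mem_ball ha).le (.smul (.inv₀ (by fun_prop) ?_) hf)
  exact fun z hz => mul_ne_zero (sub_ne_zero_of_mem_sphere_of_mem_ball hz ha)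
    (sub_ne_zero_of_mem_sphere_of_mem_ball hz hb)

theorem circleIntegral_inv_sub_mul_sub (ha : a ∈ ball c R) (hb : b ∈ ball c R) :
    (∮ z in C(c, R), ((z - a) * (z - b))⁻¹) = 0 := by
  rcases eq_or_ne a b with rfl | hab
  · simpa only [zpow_neg, zpow_ofNat, sq] using
      circleIntegral.integral_sub_zpow_of_ne (n := -2) (by decide) c a R
  · have partial_fractions : Set.EqOn (fun z => ((z - a) * (z - b))⁻¹)
        (fun z => (a - b)⁻¹ * ((z - a)⁻¹ - (z - b)⁻¹)) (sphere c R) := by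
      intro z hz
      have hza := sub_ne_zero_of_mem_sphere_of_mem_ball hz ha
      have hzb := sub_ne_zero_of_mem_sphere_of_mem_ball hz hb
      have := sub_ne_zero.2 hab
      field_simp
      ring
    have integrable {w : ℂ} (hw : w ∈ ball c R) : CircleIntegrable (fun z => (z - w)⁻¹) c R :=
      ContinuousOn.circleIntegrable (pos_of_mem_ball hw).le <|
        .inv₀ (by fun_prop) fun z hz => sub_ne_zero_of_mem_sphere_of_mem_ball hz hw
    rw [circleIntegral.integral_congr (pos_of_mem_ball ha).le partial_fractions,
      circleIntegral.integral_const_mul,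
      circleIntegral.integral_sub (integrable ha) (integrable hb),
      circleIntegral.integral_sub_inv_of_mem_ball ha,
      circleIntegral.integral_sub_inv_of_mem_ball hb, sub_self, mul_zero]

variable [CompleteSpace E]

theorem diffContOnCl_dslope {s : Set ℂ} (hf : DiffContOnCl ℂ f s) (hs : s ∈ 𝓝 a) :
    DiffContOnCl ℂ (dslope f a) s :=
  ⟨(differentiableOn_dslope hs).2 hf.differentiableOn,
    (continuousOn_dslope (Filter.mem_of_superset hs subset_closure)).2
      ⟨hf.continuousOn, hf.differentiableAt' hs⟩⟩

theorem circleIntegral_inv_sub_mul_sub_smul (hf : DiffContOnCl ℂ f (ball c R))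
    (ha : a ∈ ball c R) (hb : b ∈ ball c R) :
    (∮ z in C(c, R), ((z - a) * (z - b))⁻¹ • f z) = (2 * π * I : ℂ) • dslope f a b := by
  have hR := (pos_of_mem_ball ha).le
  have hdslope := diffContOnCl_dslope hf (isOpen_ball.mem_nhds ha)
  have expand : Set.EqOn (fun z => ((z - a) * (z - b))⁻¹ • f z)
      (fun z => (z - b)⁻¹ • dslope f a z + ((z - a) * (z - b))⁻¹ • f a) (sphere c R) := by
    intro z hz
    have hza := sub_ne_zero_of_mem_sphere_of_mem_ball hz ha
    have hfz : f z = (z - a) • dslope f a z + f a := by rw [sub_smul_dslope, sub_add_cancel]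
    simp only [hfz, smul_add, smul_smul, mul_inv_rev, inv_mul_cancel_right₀ hza]
  have integrable : CircleIntegrable (fun z => (z - b)⁻¹ • dslope f a z) c R :=
    ContinuousOn.circleIntegrable hR <| .smul
      (.inv₀ (by fun_prop) fun z hz => sub_ne_zero_of_mem_sphere_of_mem_ball hz hb)
      (hdslope.continuousOn_ball.mono sphere_subset_closedBall)
  rw [circleIntegral.integral_congr hR expand, circleIntegral.integral_add integrable
      (circleIntegrable_inv_sub_mul_sub_smul continuousOn_const ha hb),
    circleIntegral.integral_smul_const, circleIntegral_inv_sub_mul_sub ha hb, zero_smul, add_zero,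
    hdslope.circleIntegral_sub_inv_smul hb]

end TwoPoles

section SineKernel

open Complex Metric
open scoped Real

/-- The generalized sine kernel with phase `h`, extended to the diagonal by its limit there. The
phase `h z = I * x * z` gives the sine kernel `sin (x * (a - b) / 2) / (π * (a - b))`. -/
noncomputable def generalizedSineKernel (h : ℂ → ℂ) (a b : ℂ) : ℂ :=
  if a = b then deriv h a / (2 * π * I)
  else (exp ((h a - h b) / 2) - exp (-((h a - h b) / 2))) / (2 * π * I * (a - b))

theorem generalizedSineKernel_linear_add {x a : ℂ} {g : ℂ → ℂ} (hg : DifferentiableAt ℂ g a)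
    (b : ℂ) :
    generalizedSineKernel (fun z => I * x * z + g z) a b =
      if a = b then (I * x + deriv g a) / (2 * π * I)
      else (exp (I * x * (a - b) / 2 + (g a - g b) / 2) -
        exp (-(I * x * (a - b)) / 2 - (g a - g b) / 2)) / (2 * π * I * (a - b)) := by
  have hderiv : deriv (fun z => I * x * z + g z) a = I * x + deriv g a := by
    simpa using (((hasDerivAt_id a).const_mul (I * x)).fun_add hg.hasDerivAt).deriv
  rw [generalizedSineKernel, hderiv]
  ring_nf

theorem dslope_exp_neg {h : ℂ → ℂ} {a : ℂ} (hh : DifferentiableAt ℂ h a) (b : ℂ) :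
    dslope (fun z => exp (-h z)) a b =
      -(2 * π * I * exp (-(h a + h b) / 2) * generalizedSineKernel h a b) := by
  rcases eq_or_ne a b with rfl | hab
  · rw [dslope_same, hh.hasDerivAt.fun_neg.cexp.deriv, generalizedSineKernel, if_pos rfl]
    field_simp
    ring_nf
  · have hfactor : exp (-h b) - exp (-h a) =
        exp (-(h a + h b) / 2) * (exp ((h a - h b) / 2) - exp (-((h a - h b) / 2))) := by
      rw [mul_sub, ← exp_add, ← exp_add]
      ring_nf
    have hsub := sub_ne_zero.2 hab
    rw [dslope_of_ne _ hab.symm, slope_def_field, hfactor, generalizedSineKernel, if_neg hab,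
      ← neg_sub a b]
    field_simp

variable {h : ℂ → ℂ} {a b c : ℂ} {R : ℝ}

theorem exp_sub_div_mul_inv_sub (w z : ℂ) :
    w * exp (h a - h z) / (a - z) * (z - b)⁻¹ =
      -(w * exp (h a)) * (((z - a) * (z - b))⁻¹ • exp (-h z)) := by
  rw [sub_eq_add_neg (h a), exp_add, ← neg_sub z a, div_neg, div_eq_mul_inv, mul_inv, smul_eq_mul]
  ring

theorem circleIntegrable_exp_sub_div_mul_inv_sub (hh : DiffContOnCl ℂ h (ball c R))
    (ha : a ∈ ball c R) (hb : b ∈ ball c R) (w : ℂ) :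
    CircleIntegrable (fun z => w * exp (h a - h z) / (a - z) * (z - b)⁻¹) c R := by
  simp only [exp_sub_div_mul_inv_sub]
  exact (circleIntegrable_inv_sub_mul_sub_smul
    (hh.continuousOn_ball.mono sphere_subset_closedBall).neg.cexp ha hb).const_smul (a := -(_ * _))

theorem circleIntegral_exp_sub_div_mul_inv_sub (hh : DiffContOnCl ℂ h (ball c R))
    (ha : a ∈ ball c R) (hb : b ∈ ball c R) (w : ℂ) :
    (∮ z in C(c, R), w * exp (h a - h z) / (a - z) * (z - b)⁻¹) =
      (2 * π * I) ^ 2 * (exp (-(h b / 2)) * (w * generalizedSineKernel h a b) * exp (h a / 2)) := by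
  have hexp : DiffContOnCl ℂ (fun z => exp (-h z)) (ball c R) :=
    differentiable_exp.comp_diffContOnCl hh.neg
  have hprod : exp (h a) * exp (-(h a + h b) / 2) = exp (-(h b / 2)) * exp (h a / 2) := by
    rw [← exp_add, ← exp_add]
    ring_nf
  simp only [exp_sub_div_mul_inv_sub]
  rw [circleIntegral.integral_const_mul, circleIntegral_inv_sub_mul_sub_smul hexp ha hb,
    dslope_exp_neg (hh.differentiableAt isOpen_ball ha), smul_eq_mul]
  linear_combination (2 * π * I) ^ 2 * w * generalizedSineKernel h a b * hprod

end SineKernel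

section Determinant

open Complex Metric
open scoped Real

theorem det_of_mul_mul_of_mul_eq_one {ι A : Type*} [Fintype ι] [DecidableEq ι] [CommRing A]
    {u v : ι → A} (huv : ∀ i, u i * v i = 1) (M : Matrix ι ι A) :
    Matrix.det (Matrix.of fun i j => u i * M i j * v j) = M.det := by
  have hconj : (Matrix.of fun i j => u i * M i j * v j) =
      Matrix.diagonal u * M * Matrix.diagonal v := by
    ext i j
    simp
  rw [hconj, Matrix.det_mul_right_comm, Matrix.diagonal_mul_diagonal, funext huv,
    Matrix.diagonal_one, one_mul]

variable {n : ℕ} {c : ℂ} {R : ℝ} {lam : Fin n → ℂ}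

theorem iterCircleIntegral_prod_mul_det_cauchy {h : ℂ → ℂ} (hh : DiffContOnCl ℂ h (ball c R))
    (hlam : ∀ j, lam j ∈ ball c R) (w : Fin n → ℂ) :
    iterCircleIntegral n (fun z => (∏ j, w j * exp (h (lam j) - h (z j)) / (lam j - z j)) *
        Matrix.det (Matrix.of fun j k => (z k - lam j)⁻¹)) c R =
      (2 * π * I) ^ (2 * n) *
        Matrix.det (Matrix.of fun j k => w j * generalizedSineKernel h (lam j) (lam k)) := by
  set K := Matrix.of fun j k => w j * generalizedSineKernel h (lam j) (lam k)
  have hentry : (Matrix.of fun j k => ∮ z in C(c, R),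
        w k * exp (h (lam k) - h z) / (lam k - z) * (z - lam j)⁻¹) =
      (2 * π * I : ℂ) ^ 2 • Matrix.of fun j k =>
        exp (-(h (lam j) / 2)) * K.transpose j k * exp (h (lam k) / 2) := by
    ext j k
    exact circleIntegral_exp_sub_div_mul_inv_sub hh (hlam k) (hlam j) (w k)
  have hgauge (j : Fin n) : exp (-(h (lam j) / 2)) * exp (h (lam j) / 2) = 1 := by
    rw [← exp_add, neg_add_cancel, exp_zero]
  simp only [← Matrix.det_mul_row, Matrix.of_apply]
  rw [iterCircleIntegral_det fun j k =>
      circleIntegrable_exp_sub_div_mul_inv_sub hh (hlam k) (hlam j) (w k),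
    hentry, Matrix.det_smul, det_of_mul_mul_of_mul_eq_one hgauge, Matrix.det_transpose,
    Fintype.card_fin, pow_mul]

theorem stmt1_general (x : ℂ) {g : ℂ → ℂ} (hg : DiffContOnCl ℂ g (ball c R))
    (hlam : ∀ j, lam j ∈ ball c R) (w : Fin n → ℂ) (V : Matrix (Fin n) (Fin n) ℂ)
    (hV : ∀ j k, V j k =
      if lam j = lam k then
        w j * exp (-g (lam j)) * (I * x + deriv g (lam j)) / (2 * π * I)
      else
        w j * exp (-g (lam j)) *
          (exp (I * x * (lam j - lam k) / 2 + (g (lam j) - g (lam k)) / 2) -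
            exp (-(I * x * (lam j - lam k)) / 2 - (g (lam j) - g (lam k)) / 2)) /
          (2 * π * I * (lam j - lam k))) :
    (1 / (2 * π * I)) ^ (2 * n) *
      iterCircleIntegral n (fun z =>
        (∏ j, w j * exp (I * x * (lam j - z j)) * exp (-g (z j)) / (lam j - z j)) *
          Matrix.det (Matrix.of fun j k => (z k - lam j)⁻¹)) c R = V.det := by
  set h : ℂ → ℂ := fun z => I * x * z + g z with h_def
  have hh : DiffContOnCl ℂ h (ball c R) :=
    (Differentiable.diffContOnCl (by fun_prop : Differentiable ℂ fun z => I * x * z)).add hg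
  have hkernel : V = Matrix.of fun j k =>
      w j * exp (-g (lam j)) * generalizedSineKernel h (lam j) (lam k) := by
    ext j k
    rw [hV, Matrix.of_apply, generalizedSineKernel_linear_add
      (hg.differentiableAt isOpen_ball (hlam j)), mul_ite, mul_div_assoc, mul_div_assoc]
  have hweight (j : Fin n) (z : ℂ) : w j * exp (I * x * (lam j - z)) * exp (-g z) =
      w j * exp (-g (lam j)) * exp (h (lam j) - h z) := by
    simp only [h_def, mul_assoc, ← exp_add]
    ring_nf
  simp only [hweight]
  rw [iterCircleIntegral_prod_mul_det_cauchy hh hlam, ← hkernel, ← mul_assoc, ← mul_pow,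
    one_div_mul_cancel two_pi_I_ne_zero, one_pow, one_mul]

end Determinant

theorem stmt1 (x : ℝ) (z₀ : ℂ) (R R' : ℝ) (hR : 0 < R) (hRR' : R < R')
    (φ g : ℂ → ℂ)
    (hφ : DifferentiableOn ℂ φ (Metric.ball z₀ R'))
    (hg : DifferentiableOn ℂ g (Metric.ball z₀ R'))
    (n : ℕ) (lam : Fin n → ℂ) (hmem : ∀ j, lam j ∈ Metric.ball z₀ R)
    (hinj : Function.Injective lam)
    (ϑ : Fin n → ℂ)
    (V : Matrix (Fin n) (Fin n) ℂ)
    (hV : ∀ j k, V j k =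
      if j = k then
        ϑ j * φ (lam j) * Complex.exp (-(g (lam j))) * (Complex.I * (x : ℂ) + deriv g (lam j)) /
          (2 * (Real.pi : ℂ) * Complex.I)
      else
        ϑ j * φ (lam j) * Complex.exp (-(g (lam j))) *
          (Complex.exp (Complex.I * (x : ℂ) * (lam j - lam k) / 2 +
              (g (lam j) - g (lam k)) / 2) -
            Complex.exp (-(Complex.I * (x : ℂ) * (lam j - lam k)) / 2 -
              (g (lam j) - g (lam k)) / 2)) /
          (2 * (Real.pi : ℂ) * Complex.I * (lam j - lam k))) :
    (1 / (2 * (Real.pi : ℂ) * Complex.I)) ^ (2 * n) *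
      iterCircleIntegral n (fun z => (∏ j, ϑ j * φ (lam j) *
          Complex.exp (Complex.I * (x : ℂ) * (lam j - z j)) *
          Complex.exp (-(g (z j))) / (lam j - z j)) *
        Matrix.det (Matrix.of fun j k => (z k - lam j)⁻¹)) z₀ R = V.det := by
  have hg' := hg.diffContOnCl_ball (Metric.closedBall_subset_ball hRR')
  exact stmt1_general x hg' hmem (fun j => ϑ j * φ (lam j)) V (by simpa only [hinj.eq_iff] using hV)
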